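/- arXiv:2302.08879 — 2 statements merged into one kernel-verified Lean document; each statement's English description precedes it below -/
import Mathlib

section
/- Let B be a symplectic form on a 2J-dimensional vector space V over F_2 with J ≥ 2, and let D ⊆ V be an affine quadric with #D = 2^{J−1}(2^J+1). Define the real symmetric matrix H, with rows and columns indexed by D, by H(v,v) = 2^J − 1 and H(v₁,v₂) = −(−1)^{B(v₁,v₂)} for v₁ ≠ v₂ (the exponent being the value of B in F_2 = {0,1}). Then H² = 3·2^{J−1}·H; consequently H is positive semidefinite of rank (2^{2J}−1)/3, and H is the Gram matrix of an ETF of 2^{J−1}(2^J+1) vectors for a real inner product space of dimension (2^{2J}−1)/3. -/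
open scoped BigOperators

noncomputable section

/-- ETF predicate. -/
def IsETF (𝕜 : Type*) {E ι : Type*} [RCLike 𝕜] [NormedAddCommGroup E]
    [InnerProductSpace 𝕜 E] [Fintype ι] (φ : ι → E) : Prop :=
  (∃ S : ℝ, 0 < S ∧ ∀ n, (inner 𝕜 (φ n) (φ n) : 𝕜) = (S : 𝕜)) ∧
  (∃ C : ℝ, 0 < C ∧ ∀ n₁ n₂, n₁ ≠ n₂ → ‖(inner 𝕜 (φ n₁) (φ n₂) : 𝕜)‖ = C) ∧
  (∃ A : ℝ, 0 < A ∧ ∀ n₁ n₃,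
      (∑ n₂, (inner 𝕜 (φ n₁) (φ n₂) : 𝕜) * (inner 𝕜 (φ n₂) (φ n₃) : 𝕜)) =
        (A : 𝕜) * (inner 𝕜 (φ n₁) (φ n₃) : 𝕜))

/-- A bilinear form is symplectic: alternating and nondegenerate. -/
def IsSymplectic {F V : Type*} [CommRing F] [AddCommGroup V] [Module F V]
    (B : V →ₗ[F] V →ₗ[F] F) : Prop :=
  (∀ v, B v v = 0) ∧ ∀ v : V, v ≠ 0 → ∃ w, B v w ≠ 0

/-- `Q` is a quadratic form yielding the bilinear form `B` over `F₂`. -/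
def YieldsForm {V : Type*} [AddCommGroup V] [Module (ZMod 2) V]
    (B : V →ₗ[ZMod 2] V →ₗ[ZMod 2] ZMod 2) (Q : V → ZMod 2) : Prop :=
  ∀ v₁ v₂ : V, Q (v₁ + v₂) + Q v₁ + Q v₂ = B v₁ v₂

/-- The quadric of a quadratic form: its set of zeros. -/
def quadric {V : Type*} (Q : V → ZMod 2) : Set V := {v | Q v = 0}

/-- A subset is an affine quadric if it or its complement is the quadric of
some quadratic form yielding `B`. -/
def IsAffineQuadric {V : Type*} [AddCommGroup V] [Module (ZMod 2) V]
    (B : V →ₗ[ZMod 2] V →ₗ[ZMod 2] ZMod 2) (D : Set V) : Prop :=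
  ∃ Q : V → ZMod 2, YieldsForm B Q ∧ (D = quadric Q ∨ D = (quadric Q)ᶜ)

/-! Let `K` be the matrix of signs `(-1) ^ B v w` on `D`, and `q = 2 ^ J`, so that `H = q • 1 - K`.
The indicator function of `D` is `u ↦ (1 + (-1) ^ (Q u + a)) / 2` for a quadratic form `Q` yielding
`B` and a constant `a`. Hence an entry of `2 • K * K` is the sum of a character sum over `V`, which
vanishes off the diagonal because `B` is nondegenerate, and a quadratic Gauss sum, which completing
the square reduces to `∑ u, (-1) ^ (Q u + a) = 2 * #D - #V = q`. So `2 • K * K = q ^ 2 • 1 + q • K`,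
which makes `H` equal to `3 * q / 2` times an orthogonal projection. The rank is read off the trace,
and any positive semidefinite matrix is the Gram matrix of a spanning family in a space whose
dimension is its rank. -/

section Gram

open scoped Matrix ComplexOrder MatrixOrder

lemma trace_eq_mul_rank_of_mul_self_eq_smul {ι K : Type*} [Fintype ι] [Field K]
    {A : Matrix ι ι K} {c : K} (hc : c ≠ 0) (hAA : A * A = c • A) :
    A.trace = c * A.rank := by
  classical
  have hidem : IsIdempotentElem (Matrix.toLin' (c⁻¹ • A)) := by
    rw [IsIdempotentElem, Module.End.mul_eq_comp, ← Matrix.toLin'_mul, Matrix.smul_mul,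
      Matrix.mul_smul, hAA, inv_smul_smul₀ hc]
  have htrace : (c⁻¹ • A).trace = (c⁻¹ • A).rank := by
    rw [← Matrix.trace_toLin'_eq, (LinearMap.IsIdempotentElem.isProj_range _ hidem).trace,
      Matrix.rank, Matrix.toLin'_apply']
  rw [Matrix.trace_smul, smul_eq_mul,
    Matrix.rank_smul_of_mem_nonZeroDivisors _ (mem_nonZeroDivisors_of_ne_zero (inv_ne_zero hc)),
    inv_mul_eq_iff_eq_mul₀ hc] at htrace
  exact htrace

variable {𝕜 ι E : Type*} [RCLike 𝕜] [NormedAddCommGroup E] [InnerProductSpace 𝕜 E]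

lemma exists_gram_eq_of_finrank_span_eq {ψ : ι → E}
    [FiniteDimensional 𝕜 (Submodule.span 𝕜 (Set.range ψ))] {r : ℕ}
    (hr : Module.finrank 𝕜 (Submodule.span 𝕜 (Set.range ψ)) = r) :
    ∃ φ : ι → EuclideanSpace 𝕜 (Fin r),
      Matrix.gram 𝕜 φ = Matrix.gram 𝕜 ψ ∧ Submodule.span 𝕜 (Set.range φ) = ⊤ := by
  let U := Submodule.span 𝕜 (Set.range ψ)
  let ψU : ι → U := fun i ↦ ⟨ψ i, Submodule.subset_span ⟨i, rfl⟩⟩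
  let L : U ≃ₗᵢ[𝕜] EuclideanSpace 𝕜 (Fin r) :=
    ((stdOrthonormalBasis 𝕜 U).reindex (finCongr hr)).repr
  have hψU : Submodule.span 𝕜 (Set.range ψU) = ⊤ := by
    rw [← Submodule.span_span_coe_preimage]
    congr 1
    ext x
    simp [ψU, Subtype.ext_iff]
  refine ⟨L ∘ ψU, ?_, ?_⟩
  · ext i j
    exact L.inner_map_map (ψU i) (ψU j)
  · rw [Set.range_comp, ← LinearIsometryEquiv.coe_toLinearEquiv, ← LinearEquiv.coe_coe,
      ← Submodule.map_span, hψU, Submodule.map_top, LinearEquiv.range]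

variable [Fintype ι] {A : Matrix ι ι 𝕜} {c : ℝ}

lemma posSemidef_of_mul_self_eq_smul (hA : A.IsHermitian) (hc : 0 < c) (hAA : A * A = c • A) :
    A.PosSemidef := by
  have hA_eq : A = c⁻¹ • (Aᴴ * A) := by rw [hA.eq, hAA, inv_smul_smul₀ hc.ne']
  rw [hA_eq]
  exact (Matrix.posSemidef_conjTranspose_mul_self A).smul (inv_pos.mpr hc).le

lemma exists_gram_eq_of_posSemidef (hA : A.PosSemidef) {r : ℕ} (hr : A.rank = r) :
    ∃ φ : ι → EuclideanSpace 𝕜 (Fin r),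
      Matrix.gram 𝕜 φ = A ∧ Submodule.span 𝕜 (Set.range φ) = ⊤ := by
  classical
  obtain ⟨M, rfl⟩ := CStarAlgebra.nonneg_iff_eq_star_mul_self.mp hA.nonneg
  let ψ : ι → EuclideanSpace 𝕜 ι := fun i ↦ WithLp.toLp 2 (M.col i)
  have hψ : Matrix.gram 𝕜 ψ = star M * M := by
    ext i j
    simp [ψ, PiLp.inner_apply, Matrix.mul_apply, mul_comm]
  have hspan : Module.finrank 𝕜 (Submodule.span 𝕜 (Set.range ψ)) = r := by
    rw [← hr, Matrix.star_eq_conjTranspose, Matrix.rank_conjTranspose_mul_self,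
      Matrix.rank_eq_finrank_span_cols,
      ← LinearEquiv.finrank_map_eq (WithLp.linearEquiv 2 𝕜 (ι → 𝕜)), Submodule.map_span,
      ← Set.range_comp]
    rfl
  obtain ⟨φ, hφ, hφspan⟩ := exists_gram_eq_of_finrank_span_eq hspan
  exact ⟨φ, hφ.trans hψ, hφspan⟩

lemma isETF_of_gram_eq {φ : ι → E} (hφ : Matrix.gram 𝕜 φ = A) {s b : ℝ} (hs : 0 < s) (hb : 0 < b)
    (hc : 0 < c) (hdiag : ∀ i, A i i = s) (hoff : ∀ i j, i ≠ j → ‖A i j‖ = b)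
    (hAA : A * A = c • A) :
    IsETF 𝕜 φ := by
  subst hφ
  refine ⟨⟨s, hs, hdiag⟩, ⟨b, hb, hoff⟩, ⟨c, hc, fun i k ↦ ?_⟩⟩
  have hik := congrFun₂ hAA i k
  rwa [Matrix.mul_apply, Matrix.smul_apply, RCLike.real_smul_eq_coe_mul] at hik

end Gram

/-- The nontrivial character `x ↦ (-1) ^ x` of `𝔽₂`, with real values. -/
def signChar : AddChar (ZMod 2) ℝ := AddChar.zmodChar 2 neg_one_sq

lemma signChar_apply (x : ZMod 2) : signChar x = (-1) ^ x.val := rfl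

lemma abs_signChar (x : ZMod 2) : |signChar x| = 1 := by simp [signChar_apply]

lemma zmod_two_eq_zero_or_eq_one (x : ZMod 2) : x = 0 ∨ x = 1 := by
  revert x; decide

lemma signChar_eq_one_iff {x : ZMod 2} : signChar x = 1 ↔ x = 0 := by
  rcases zmod_two_eq_zero_or_eq_one x with rfl | rfl <;> norm_num [signChar_apply, ZMod.val_one]

lemma two_mul_sum_eq_sum_add_sum_signChar_mul {α : Type*} [Fintype α] {D : Finset α}
    {P : α → ZMod 2} (hD : ∀ u, u ∈ D ↔ P u = 0) (f : α → ℝ) :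
    2 * ∑ u ∈ D, f u = ∑ u, f u + ∑ u, signChar (P u) * f u := by
  classical
  have hindicator (u : α) : (if u ∈ D then 2 * f u else 0) = f u + signChar (P u) * f u := by
    rcases zmod_two_eq_zero_or_eq_one (P u) with hu | hu
    · simp [hD, hu, two_mul]
    · simp [hD, hu, signChar_apply, ZMod.val_one]
  rw [Finset.mul_sum, ← Finset.sum_add_distrib, ← Finset.sum_congr rfl fun u _ ↦ hindicator u,
    Finset.sum_ite_mem, Finset.univ_inter]

lemma card_eq_sq_of_finrank_eq_two_mul {K V : Type*} [Field K] [Fintype K] [AddCommGroup V]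
    [Module K V] [Fintype V] {n : ℕ} (hV : Module.finrank K V = 2 * n) :
    Fintype.card V = (Fintype.card K ^ n) ^ 2 := by
  rw [Module.card_eq_pow_finrank (K := K), hV, mul_comm, pow_mul]

section AffineQuadric

variable {V : Type*} [AddCommGroup V] [Module (ZMod 2) V]
  {B : V →ₗ[ZMod 2] V →ₗ[ZMod 2] ZMod 2}

namespace IsSymplectic

lemma apply_comm (hB : IsSymplectic B) (v w : V) : B v w = B w v := by
  rw [← LinearMap.IsAlt.neg hB.1 w v, ZModModule.neg_eq_self]

lemma sum_signChar [Fintype V] [DecidableEq V] (hB : IsSymplectic B) (w : V) :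
    ∑ u, signChar (B w u) = if w = 0 then (Fintype.card V : ℝ) else 0 := by
  classical
  have htrivial : signChar.compAddMonoidHom (B w).toAddMonoidHom = 0 ↔ w = 0 := by
    refine ⟨fun h ↦ ?_, fun h ↦ ?_⟩
    · by_contra hw
      obtain ⟨u, hu⟩ := hB.2 w hw
      exact hu (signChar_eq_one_iff.mp (DFunLike.congr_fun h u))
    · ext u
      simp [h]
  rw [← if_congr htrivial rfl rfl, ← AddChar.sum_eq_ite]
  rfl

end IsSymplectic

namespace YieldsForm

variable {Q : V → ZMod 2}

lemma map_add (hQ : YieldsForm B Q) (v w : V) : Q (v + w) = Q v + Q w + B v w := by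
  rw [← hQ v w]
  generalize Q (v + w) = a, Q v = b, Q w = c
  revert a b c; decide

/-- Completing the square: `Q u + B w u = Q (w + u) + Q w`. -/
lemma sum_signChar_add_mul [Fintype V] (hQ : YieldsForm B Q) (a : ZMod 2) (w : V) :
    ∑ u, signChar (Q u + a) * signChar (B w u) = signChar (Q w) * ∑ u, signChar (Q u + a) := by
  rw [← Equiv.sum_comp (Equiv.addLeft w) fun u ↦ signChar (Q u + a), Finset.mul_sum]
  refine Finset.sum_congr rfl fun u _ ↦ ?_
  rw [Equiv.coe_addLeft, hQ.map_add, ← AddChar.map_add_eq_mul, ← AddChar.map_add_eq_mul]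
  congr 1
  generalize Q w = b, Q u = d, B w u = e
  revert a b d e; decide

end YieldsForm

/-- The real matrix `(-1) ^ B v w` for `v, w ∈ D`. With `q = 2 ^ J`, the Gram matrix of the ETF is
`q • 1 - signMatrix B D`. -/
def signMatrix (B : V →ₗ[ZMod 2] V →ₗ[ZMod 2] ZMod 2) (D : Finset V) : Matrix D D ℝ :=
  Matrix.of fun v w ↦ signChar (B v.1 w.1)

lemma signMatrix_apply (D : Finset V) (v w : D) : signMatrix B D v w = signChar (B v.1 w.1) := rfl

lemma IsSymplectic.trace_smul_one_sub_signMatrix [DecidableEq V] (hB : IsSymplectic B)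
    (D : Finset V) (q : ℝ) :
    (q • (1 : Matrix D D ℝ) - signMatrix B D).trace = D.card * (q - 1) := by
  simp [Matrix.trace, signMatrix_apply, hB.1, mul_sub]

lemma IsSymplectic.isHermitian_smul_one_sub_signMatrix [DecidableEq V] (hB : IsSymplectic B)
    (D : Finset V) (q : ℝ) : (q • (1 : Matrix D D ℝ) - signMatrix B D).IsHermitian :=
  (Matrix.isHermitian_one.smul (.all q)).sub <|
    Matrix.ext fun v w ↦ congrArg signChar (hB.apply_comm w.1 v.1)

lemma IsSymplectic.eq_smul_one_sub_signMatrix [DecidableEq V] (hB : IsSymplectic B) {D : Finset V}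
    {H : Matrix D D ℝ} {q : ℝ} (hdiag : ∀ v, H v v = q - 1)
    (hoff : ∀ v w : D, v ≠ w → H v w = -signChar (B v.1 w.1)) :
    H = q • (1 : Matrix D D ℝ) - signMatrix B D := by
  ext v w
  obtain rfl | hvw := eq_or_ne v w
  · simp [hdiag, signMatrix_apply, hB.1]
  · simp [hoff v w hvw, signMatrix_apply, hvw]

namespace IsAffineQuadric

variable {D : Finset V}

lemma exists_mem_iff (hD : IsAffineQuadric B (D : Set V)) :
    ∃ Q : V → ZMod 2, YieldsForm B Q ∧ ∃ a, ∀ u, u ∈ D ↔ Q u + a = 0 := by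
  obtain ⟨Q, hQ, hDQ | hDQ⟩ := hD
  · exact ⟨Q, hQ, 0, fun u ↦ by rw [← Finset.mem_coe, hDQ, add_zero]; rfl⟩
  · have hne (x : ZMod 2) : x ≠ 0 ↔ x + 1 = 0 := by revert x; decide
    exact ⟨Q, hQ, 1, fun u ↦ by rw [← Finset.mem_coe, hDQ, ← hne]; rfl⟩

variable [Fintype V] [DecidableEq V]

lemma two_mul_sum_signChar_mul (hD : IsAffineQuadric B (D : Set V)) (hB : IsSymplectic B)
    {v w : V} (hv : v ∈ D) (hw : w ∈ D) :
    2 * ∑ u ∈ D, signChar (B v u) * signChar (B w u) =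
      (if v = w then (Fintype.card V : ℝ) else 0) +
        (2 * D.card - Fintype.card V) * signChar (B v w) := by
  obtain ⟨Q, hQ, a, hDQ⟩ := hD.exists_mem_iff
  have hcard : ∑ u, signChar (Q u + a) = 2 * D.card - Fintype.card V := by
    have h := two_mul_sum_eq_sum_add_sum_signChar_mul hDQ fun _ ↦ 1
    simp only [Finset.sum_const, nsmul_eq_mul, mul_one, Finset.card_univ] at h
    linarith
  have hQvw : Q (v + w) = B v w := by
    have hvw : Q v = Q w := add_right_cancel (((hDQ v).mp hv).trans ((hDQ w).mp hw).symm)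
    rw [hQ.map_add, hvw, ZModModule.add_self, zero_add]
  have hvw_zero : v + w = 0 ↔ v = w := by rw [← ZModModule.sub_eq_add, sub_eq_zero]
  simp_rw [← AddChar.map_add_eq_mul, ← LinearMap.add_apply, ← _root_.map_add]
  rw [two_mul_sum_eq_sum_add_sum_signChar_mul hDQ, hB.sum_signChar, hQ.sum_signChar_add_mul,
    hcard, hQvw, if_congr hvw_zero rfl rfl, mul_comm (signChar _)]

lemma two_smul_signMatrix_mul_self (hD : IsAffineQuadric B (D : Set V)) (hB : IsSymplectic B) :
    (2 : ℝ) • (signMatrix B D * signMatrix B D) =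
      (Fintype.card V : ℝ) • (1 : Matrix D D ℝ) +
        (2 * D.card - Fintype.card V : ℝ) • signMatrix B D := by
  ext v w
  have hvw := hD.two_mul_sum_signChar_mul hB v.2 w.2
  rw [← Finset.sum_coe_sort] at hvw
  simp only [Matrix.smul_apply, Matrix.add_apply, Matrix.mul_apply, Matrix.one_apply,
    signMatrix_apply, smul_eq_mul, mul_ite, mul_one, mul_zero, Subtype.ext_iff]
  simpa only [hB.apply_comm w.1] using hvw

lemma smul_one_sub_signMatrix_mul_self (hD : IsAffineQuadric B (D : Set V)) (hB : IsSymplectic B)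
    {q : ℝ} (hV : (Fintype.card V : ℝ) = q ^ 2) (hDcard : 2 * (D.card : ℝ) = q ^ 2 + q) :
    (q • (1 : Matrix D D ℝ) - signMatrix B D) * (q • (1 : Matrix D D ℝ) - signMatrix B D) =
      (3 * q / 2) • (q • (1 : Matrix D D ℝ) - signMatrix B D) := by
  have hK := hD.two_smul_signMatrix_mul_self hB
  rw [hV, hDcard, add_sub_cancel_left] at hK
  generalize signMatrix B D = K at hK ⊢
  have hKK : K * K = (q ^ 2 / 2) • (1 : Matrix D D ℝ) + (q / 2) • K := by
    rw [← inv_smul_smul₀ (two_ne_zero' ℝ) (K * K), hK]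
    module
  simp only [sub_mul, mul_sub, smul_mul_assoc, mul_smul_comm, one_mul, mul_one, hKK]
  module

lemma three_mul_rank_smul_one_sub_signMatrix (hD : IsAffineQuadric B (D : Set V))
    (hB : IsSymplectic B) {q : ℝ} (hq : q ≠ 0)
    (hV : (Fintype.card V : ℝ) = q ^ 2) (hDcard : 2 * (D.card : ℝ) = q ^ 2 + q) :
    3 * ((q • (1 : Matrix D D ℝ) - signMatrix B D).rank : ℝ) = q ^ 2 - 1 := by
  have htrace := trace_eq_mul_rank_of_mul_self_eq_smul (by positivity)
    (hD.smul_one_sub_signMatrix_mul_self hB hV hDcard)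
  rw [hB.trace_smul_one_sub_signMatrix] at htrace
  apply mul_left_cancel₀ hq
  linear_combination (q - 1) * hDcard - 2 * htrace

end IsAffineQuadric

end AffineQuadric

/-- For an affine quadric `D` of size `2^{J−1}(2^J+1)`, the matrix
`H` indexed by `D` with diagonal `2^J−1` and off-diagonal `−(−1)^{B(v₁,v₂)}`
satisfies `H² = 3·2^{J−1}·H`, is positive semidefinite of rank `(2^{2J}−1)/3`,
and is the Gram matrix of an ETF of `2^{J−1}(2^J+1)` vectors for a real space of
dimension `(2^{2J}−1)/3`. -/
theorem gram_of_symplectic_dual_sub_ETF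
    {J : ℕ} (hJ : 2 ≤ J)
    {V : Type*} [AddCommGroup V] [Module (ZMod 2) V] [Fintype V] [DecidableEq V]
    (hdim : Module.finrank (ZMod 2) V = 2 * J)
    (B : V →ₗ[ZMod 2] V →ₗ[ZMod 2] ZMod 2) (hB : IsSymplectic B)
    (D : Finset V) (hD : IsAffineQuadric B (D : Set V))
    (hDcard : D.card = 2 ^ (J - 1) * (2 ^ J + 1))
    (H : Matrix ↥D ↥D ℝ)
    (hHdiag : ∀ v, H v v = 2 ^ J - 1)
    (hHoff : ∀ v₁ v₂ : ↥D, v₁ ≠ v₂ → H v₁ v₂ = -(-1 : ℝ) ^ (B v₁.1 v₂.1).val) :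
    H * H = ((3 * 2 ^ (J - 1) : ℝ)) • H ∧
    H.PosSemidef ∧
    H.rank = (2 ^ (2 * J) - 1) / 3 ∧
    ∃ φ : ↥D → EuclideanSpace ℝ (Fin ((2 ^ (2 * J) - 1) / 3)),
      IsETF ℝ φ ∧
      (∀ v₁ v₂ : ↥D, (inner ℝ (φ v₁) (φ v₂) : ℝ) = H v₁ v₂) ∧
      Submodule.span ℝ (Set.range φ) = ⊤ := by
  have hq : (2 : ℝ) ^ J = 2 * 2 ^ (J - 1) := (mul_pow_sub_one (by omega) 2).symm
  have hV : (Fintype.card V : ℝ) = (2 ^ J) ^ 2 := mod_cast card_eq_sq_of_finrank_eq_two_mul hdim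
  have hDq : 2 * (D.card : ℝ) = (2 ^ J) ^ 2 + 2 ^ J := by
    rw [hDcard]; push_cast; linear_combination (-(2 : ℝ) ^ J - 1) * hq
  have hH : H = (2 : ℝ) ^ J • 1 - signMatrix B D := hB.eq_smul_one_sub_signMatrix hHdiag hHoff
  have hHH : H * H = (3 * 2 ^ (J - 1) : ℝ) • H := by
    rw [hH, hD.smul_one_sub_signMatrix_mul_self hB hV hDq, hq]; congr 1; ring
  have hc : (0 : ℝ) < 3 * 2 ^ (J - 1) := by positivity
  have hpsd : H.PosSemidef :=
    posSemidef_of_mul_self_eq_smul (hH ▸ hB.isHermitian_smul_one_sub_signMatrix D _) hc hHH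
  have hrank : H.rank = (2 ^ (2 * J) - 1) / 3 := by
    have h := hD.three_mul_rank_smul_one_sub_signMatrix hB (by positivity) hV hDq
    rw [← hH, eq_sub_iff_add_eq, ← pow_mul, mul_comm J] at h
    norm_cast at h
    omega
  obtain ⟨φ, hφ, hspan⟩ := exists_gram_eq_of_posSemidef hpsd hrank
  have hETF : IsETF ℝ φ := isETF_of_gram_eq hφ
    (sub_pos.mpr (one_lt_pow₀ one_lt_two (by omega))) one_pos hc hHdiag
    (fun v w hvw ↦ by rw [hHoff v w hvw, norm_neg]; exact abs_signChar _) hHH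
  exact ⟨hHH, hpsd, hrank, φ, hETF, congrFun₂ hφ, hspan⟩
end
end

section
/- Let B be a symplectic form on a 2J-dimensional vector space V over F_2 with J ≥ 2, and let D ⊆ V be an affine quadric with #D = 2^{J−1}(2^J+1). Then every affine Lagrangian subspace v + L of V that is not contained in D satisfies #((v+L) ∩ (V∖D)) = 2^{J−1} = #((v+L) ∩ D). Moreover, restricted to the affine Lagrangian subspaces not contained in D: the assignment v + L ↦ (v+L) ∩ D is injective, while the assignment v + L ↦ (v+L) ∩ (V∖D) is exactly three-to-one, i.e., every set of the form (v+L) ∩ (V∖D) arises from exactly three affine Lagrangian subspaces not contained in D. Consequently every pair of distinct points of V∖D is contained in exactly ∏_{j=2}^{J−1}(2^j+1) of the distinct sets of the form (v+L) ∩ (V∖D), so these sets form a BIBD on the point set V∖D with parameters V = 2^{J−1}(2^J−1), K = 2^{J−1}, Λ = ∏_{j=2}^{J−1}(2^j+1) (an empty product being 1). -/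
open scoped BigOperators

noncomputable section

/-- The orthogonal complement of a subset with respect to a bilinear form. -/
def sympPerp {F V : Type*} [CommRing F] [AddCommGroup V] [Module F V]
    (B : V →ₗ[F] V →ₗ[F] F) (S : Set V) : Set V :=
  {w | ∀ v ∈ S, B v w = 0}

/-- A subspace is Lagrangian if it equals its own orthogonal complement. -/
def IsLagrangian {F V : Type*} [CommRing F] [AddCommGroup V] [Module F V]
    (B : V →ₗ[F] V →ₗ[F] F) (L : Submodule F V) : Prop :=
  (L : Set V) = sympPerp B (L : Set V)

/-- The affine Lagrangian subspaces: cosets `v + L` of Lagrangian subspaces. -/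
def affineLagrangians {F V : Type*} [CommRing F] [AddCommGroup V] [Module F V]
    (B : V →ₗ[F] V →ₗ[F] F) : Set (Set V) :=
  {A | ∃ (v : V) (L : Submodule F V), IsLagrangian B L ∧
        A = (fun x => v + x) '' (L : Set V)}

/-!
A quadratic function `f` with `D = {f = 0}` restricts to an affine function on every coset of a
Lagrangian `L`, so a coset on which `f` is not constant is halved by `D`. If some coset of `L`
missed `D`, the linear parts of `f` on the other cosets would be nonzero, so `D` would fill at most
half of every coset; as `D` has more than half of all points, every affine Lagrangian meets `D`.

Hence the traces on `D` and on its complement of an affine Lagrangian not contained in `D` are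
cosets of isotropic subspaces `H` of codimension one in `L`, and exactly three Lagrangians contain
such an `H`. All three give the same trace on the complement, whereas two of them with the same
trace `v + H` on `D` would produce a coset of the third one that misses `D`. The number of traces
through two points follows by counting the affine Lagrangians through them.
-/

section

open Module
open scoped Pointwise

section Counting

variable {α β : Type*}

lemma ncard_mul_eq_ncard_mul {s : Set α} {t : Set β} (hs : s.Finite) (ht : t.Finite)
    (r : α → β → Prop) {m n : ℕ} (hm : ∀ a ∈ s, {b ∈ t | r a b}.ncard = m)
    (hn : ∀ b ∈ t, {a ∈ s | r a b}.ncard = n) : s.ncard * m = t.ncard * n := by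
  classical
  lift s to Finset α using hs
  lift t to Finset β using ht
  simp only [Finset.mem_coe, ← Finset.coe_filter, Set.ncard_coe_finset] at hm hn ⊢
  exact Finset.card_mul_eq_card_mul r hm hn

lemma ncard_eq_ncard_image_mul {s : Set α} (hs : s.Finite) (g : α → β) {n : ℕ}
    (hn : ∀ a ∈ s, {a' ∈ s | g a' = g a}.ncard = n) : s.ncard = (g '' s).ncard * n := by
  have hfiber : ∀ a ∈ s, {b ∈ g '' s | g a = b}.ncard = 1 := fun a ha ↦
    Set.ncard_eq_one.2 ⟨g a, Set.ext fun b ↦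
      ⟨fun h ↦ h.2.symm, fun h ↦ ⟨h ▸ Set.mem_image_of_mem g ha, h.symm⟩⟩⟩
  simpa using ncard_mul_eq_ncard_mul hs (hs.image g) (fun a b ↦ g a = b) hfiber
    (Set.forall_mem_image.2 hn)

lemma ncard_le_ncard_of_forall_fiber [Finite α] (g : α → β) {s t : Set α}
    (h : ∀ a, (g ⁻¹' {g a} ∩ s).ncard ≤ (g ⁻¹' {g a} ∩ t).ncard) : s.ncard ≤ t.ncard := by
  classical
  have := Fintype.ofFinite α
  have hsum (u : Set α) :
      u.ncard = ∑ b ∈ Finset.univ.image g, (g ⁻¹' {b} ∩ u).ncard := by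
    rw [Set.ncard_eq_toFinset_card', Finset.card_eq_sum_card_fiberwise
      (t := Finset.univ.image g) (f := g) (by simp [Set.MapsTo])]
    refine Finset.sum_congr rfl fun b _ ↦ ?_
    rw [Set.ncard_eq_toFinset_card']
    congr 1
    ext a
    simp [and_comm]
  rw [hsum s, hsum t]
  exact Finset.sum_le_sum (Finset.forall_mem_image.2 fun a _ ↦ h a)

end Counting

section Symplectic

variable {K V : Type*} [Field K] [AddCommGroup V] [Module K V] {B : V →ₗ[K] V →ₗ[K] K}
  {L W : Submodule K V}

lemma vadd_submodule_eq_iff {x y : V} : x +ᵥ (W : Set V) = y +ᵥ (W : Set V) ↔ x - y ∈ W := by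
  rw [eq_comm, sub_eq_neg_add]
  exact leftAddCoset_eq_iff W.toAddSubgroup

lemma ncard_vadd_submodule [FiniteDimensional K V] (v : V) (W : Submodule K V) :
    (v +ᵥ (W : Set V)).ncard = Nat.card K ^ finrank K W :=
  (Set.ncard_vadd_set v _).trans (Module.natCard_eq_pow_finrank (K := K) (V := W))

lemma mem_sup_span_singleton_iff {x u : V} : x ∈ W ⊔ K ∙ u ↔ ∃ w ∈ W, ∃ a : K, w + a • u = x := by
  simp [Submodule.mem_sup, Submodule.mem_span_singleton]

lemma mkQ_preimage_singleton (W : Submodule K V) (x : V) :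
    W.mkQ ⁻¹' {W.mkQ x} = x +ᵥ (W : Set V) := by
  ext y
  rw [mem_leftAddCoset_iff]
  simp [Submodule.Quotient.eq, neg_add_eq_sub]

namespace IsSymplectic

lemma isAlt (hB : IsSymplectic B) : B.IsAlt := hB.1

lemma nondegenerate (hB : IsSymplectic B) : B.Nondegenerate :=
  hB.isAlt.isRefl.nondegenerate_iff_separatingLeft.2 fun v hv ↦ by
    by_contra hne
    obtain ⟨w, hw⟩ := hB.2 v hne
    exact hw (hv w)

lemma finrank_add_finrank_orthogonalBilin [FiniteDimensional K V] (hB : IsSymplectic B)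
    (W : Submodule K V) :
    finrank K W + finrank K (W.orthogonalBilin B) = finrank K V := by
  have h : finrank K (W.orthogonalBilin B) = finrank K V - finrank K W :=
    LinearMap.BilinForm.finrank_orthogonal hB.nondegenerate W
  have := W.finrank_le
  omega

lemma span_singleton_le_orthogonalBilin (hB : IsSymplectic B) (u : V) :
    K ∙ u ≤ (K ∙ u).orthogonalBilin B := by
  rw [LinearMap.orthogonal_span_singleton_eq_to_lin_ker, Submodule.span_singleton_le_iff_mem]
  exact hB.1 u

lemma sup_span_singleton_le_orthogonalBilin (hB : IsSymplectic B)
    (hW : W ≤ W.orthogonalBilin B) {u : V} (hu : u ∈ W.orthogonalBilin B) :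
    W ⊔ K ∙ u ≤ (W ⊔ K ∙ u).orthogonalBilin B := by
  intro x hx y hy
  obtain ⟨w, hw, a, rfl⟩ := mem_sup_span_singleton_iff.1 hx
  obtain ⟨w', hw', b, rfl⟩ := mem_sup_span_singleton_iff.1 hy
  have hw'w : B w' w = 0 := hW hw w' hw'
  have hw'u : B w' u = 0 := hu w' hw'
  have huw : B u w = 0 := hB.isAlt.isRefl w u (hu w hw)
  simp [hw'w, hw'u, huw, hB.1]

end IsSymplectic

lemma isLagrangian_iff : IsLagrangian B L ↔ L = L.orthogonalBilin B :=
  SetLike.coe_set_eq (p := L) (q := L.orthogonalBilin B)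

lemma IsLagrangian.mem_iff (hL : IsLagrangian B L) {x : V} : x ∈ L ↔ ∀ w ∈ L, B w x = 0 :=
  SetLike.ext_iff.1 (isLagrangian_iff.1 hL) x

lemma IsLagrangian.le_orthogonalBilin_of_le (hL : IsLagrangian B L) (hW : W ≤ L) :
    L ≤ W.orthogonalBilin B :=
  fun _ hx w hw ↦ hL.mem_iff.1 hx w (hW hw)

lemma IsLagrangian.eq_of_le {L₁ L₂ : Submodule K V} (hL₁ : IsLagrangian B L₁)
    (hL₂ : IsLagrangian B L₂) (h : L₁ ≤ L₂) : L₁ = L₂ :=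
  h.antisymm ((hL₂.le_orthogonalBilin_of_le h).trans (isLagrangian_iff.1 hL₁).ge)

lemma IsLagrangian.two_mul_finrank [FiniteDimensional K V] (hB : IsSymplectic B)
    (hL : IsLagrangian B L) : 2 * finrank K L = finrank K V := by
  have h := hB.finrank_add_finrank_orthogonalBilin L
  rw [← isLagrangian_iff.1 hL] at h
  omega

lemma isLagrangian_of_two_mul_finrank [FiniteDimensional K V] (hB : IsSymplectic B)
    (hL : L ≤ L.orthogonalBilin B) (h : 2 * finrank K L = finrank K V) : IsLagrangian B L := by
  have := hB.finrank_add_finrank_orthogonalBilin L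
  exact isLagrangian_iff.2 (Submodule.eq_of_le_of_finrank_le hL (by omega))

/-- The Lagrangian subspaces containing a given subspace `W`. -/
def lagrangiansAbove (B : V →ₗ[K] V →ₗ[K] K) (W : Submodule K V) : Set (Submodule K V) :=
  {L | IsLagrangian B L ∧ W ≤ L}

lemma lagrangiansAbove_eq_singleton (hL : IsLagrangian B L) : lagrangiansAbove B L = {L} :=
  Set.eq_singleton_iff_unique_mem.2 ⟨⟨hL, le_rfl⟩, fun _ h ↦ (hL.eq_of_le h.1 h.2).symm⟩

lemma ncard_submodule_sdiff [Finite V] (h : W ≤ L) :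
    ((L : Set V) \ W).ncard = Nat.card K ^ finrank K L - Nat.card K ^ finrank K W := by
  rw [Set.ncard_sdiff h, ← zero_vadd V (L : Set V), ← zero_vadd V (W : Set V),
    ncard_vadd_submodule, ncard_vadd_submodule]

-- Double counting of the pairs `u ∈ L` with `L` Lagrangian above `W` and `u ∉ W`: such `u` are the
-- elements of `Wᗮ \ W`, and the Lagrangians above `W` and `u` are those above `W ⊔ K ∙ u`.
lemma ncard_lagrangiansAbove_mul [Finite V] (hB : IsSymplectic B)
    (hW : W ≤ W.orthogonalBilin B) {m P : ℕ} (hfr : finrank K V = 2 * (finrank K W + m))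
    (hP : ∀ u ∈ W.orthogonalBilin B, u ∉ W → (lagrangiansAbove B (W ⊔ K ∙ u)).ncard = P) :
    (Nat.card K ^ (finrank K W + 2 * m) - Nat.card K ^ finrank K W) * P =
      (lagrangiansAbove B W).ncard *
        (Nat.card K ^ (finrank K W + m) - Nat.card K ^ finrank K W) := by
  have hperp : finrank K (W.orthogonalBilin B) = finrank K W + 2 * m := by
    have := hB.finrank_add_finrank_orthogonalBilin W
    omega
  rw [← hperp, ← ncard_submodule_sdiff hW]
  refine ncard_mul_eq_ncard_mul (Set.toFinite _) (Set.toFinite _) (fun u L ↦ u ∈ L) ?_ ?_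
  · rintro u ⟨hu, huW⟩
    rw [← hP u hu huW]
    congr 1
    ext L
    simp [lagrangiansAbove, and_assoc]
  · rintro L ⟨hL, hWL⟩
    have hfrL : finrank K L = finrank K W + m := by
      have := hL.two_mul_finrank hB
      omega
    rw [← hfrL, ← ncard_submodule_sdiff hWL]
    congr 1
    ext u
    exact ⟨fun ⟨⟨_, hu⟩, huL⟩ ↦ ⟨huL, hu⟩,
      fun ⟨huL, hu⟩ ↦ ⟨⟨hL.le_orthogonalBilin_of_le hWL huL, hu⟩, huL⟩⟩

lemma pow_add_two_mul_sub_pow {q : ℕ} (hq : 0 < q) (k m : ℕ) :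
    q ^ (k + 2 * m) - q ^ k = (q ^ (k + m) - q ^ k) * (q ^ m + 1) := by
  have hk : q ^ k ≤ q ^ (k + m) := Nat.pow_le_pow_right hq (by omega)
  have hk' : q ^ k ≤ q ^ (k + 2 * m) := Nat.pow_le_pow_right hq (by omega)
  zify [hk, hk']
  ring

lemma ncard_lagrangiansAbove [Finite K] [Finite V] (hB : IsSymplectic B)
    (hW : W ≤ W.orthogonalBilin B) {n : ℕ} (hfr : finrank K V = 2 * (finrank K W + n)) :
    (lagrangiansAbove B W).ncard = ∏ j ∈ Finset.Icc 1 n, (Nat.card K ^ j + 1) := by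
  induction n generalizing W with
  | zero =>
    rw [lagrangiansAbove_eq_singleton (isLagrangian_of_two_mul_finrank hB hW hfr.symm)]
    simp
  | succ n ih =>
    have hrec := ncard_lagrangiansAbove_mul hB hW hfr fun u hu huW ↦
      ih (hB.sup_span_singleton_le_orthogonalBilin hW hu)
        (by rw [Submodule.finrank_sup_span_singleton huW]; omega)
    have hq : 1 < Nat.card K := Finite.one_lt_card
    have hpos : 0 < Nat.card K ^ (finrank K W + (n + 1)) - Nat.card K ^ finrank K W :=
      Nat.sub_pos_of_lt (Nat.pow_lt_pow_right hq (by omega))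
    rw [pow_add_two_mul_sub_pow (by omega), mul_assoc,
      mul_comm (lagrangiansAbove B W).ncard] at hrec
    rw [Finset.prod_Icc_succ_top (by omega), ← Nat.eq_of_mul_eq_mul_left hpos hrec, mul_comm]

lemma vadd_mem_affineLagrangians {A : Set V} (hA : A ∈ affineLagrangians B) (v : V) :
    v +ᵥ A ∈ affineLagrangians B := by
  obtain ⟨w, L, hL, rfl⟩ := hA
  exact ⟨v + w, L, hL, (vadd_vadd v w (L : Set V)).trans rfl⟩

lemma exists_eq_vadd_of_mem_affineLagrangians {A : Set V} (hA : A ∈ affineLagrangians B) {x : V}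
    (hx : x ∈ A) : ∃ L, IsLagrangian B L ∧ A = x +ᵥ (L : Set V) := by
  obtain ⟨v, L, hL, rfl⟩ := hA
  obtain ⟨l, hl, rfl⟩ := hx
  exact ⟨L, hL, vadd_submodule_eq_iff.2 (by simpa using hl)⟩

lemma ncard_affineLagrangians_superset (x : V) (W : Submodule K V) :
    {A ∈ affineLagrangians B | x +ᵥ (W : Set V) ⊆ A}.ncard = (lagrangiansAbove B W).ncard := by
  have himage : {A ∈ affineLagrangians B | x +ᵥ (W : Set V) ⊆ A} =
      (fun L : Submodule K V ↦ x +ᵥ (L : Set V)) '' lagrangiansAbove B W := by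
    ext A
    constructor
    · rintro ⟨hA, hWA⟩
      have hx : x ∈ A := hWA ⟨0, W.zero_mem, add_zero x⟩
      obtain ⟨L, hL, rfl⟩ := exists_eq_vadd_of_mem_affineLagrangians hA hx
      exact ⟨L, ⟨hL, Set.vadd_set_subset_vadd_set_iff.1 hWA⟩, rfl⟩
    · rintro ⟨L, ⟨hL, hWL⟩, rfl⟩
      exact ⟨⟨x, L, hL, rfl⟩, Set.vadd_set_mono hWL⟩
  rw [himage, Set.ncard_image_of_injective]
  exact (AddAction.injective x).comp SetLike.coe_injective

lemma vadd_span_singleton_sub_subset_iff {A : Set V} (hA : A ∈ affineLagrangians B) {x y : V} :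
    x +ᵥ (K ∙ (y - x) : Set V) ⊆ A ↔ x ∈ A ∧ y ∈ A := by
  constructor
  · exact fun h ↦ ⟨h ⟨0, Submodule.zero_mem _, add_zero x⟩,
      h ⟨y - x, Submodule.mem_span_singleton_self _, add_sub_cancel x y⟩⟩
  · rintro ⟨hx, hy⟩
    obtain ⟨L, -, rfl⟩ := exists_eq_vadd_of_mem_affineLagrangians hA hx
    obtain ⟨l, hl, rfl⟩ := hy
    refine Set.vadd_set_mono (SetLike.coe_subset_coe.2 ?_)
    simpa using hl

lemma ncard_affineLagrangians_mem_mem [Finite K] [Finite V] (hB : IsSymplectic B) {n : ℕ}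
    (hfr : finrank K V = 2 * (n + 1)) {x y : V} (hxy : x ≠ y) :
    {A ∈ affineLagrangians B | x ∈ A ∧ y ∈ A}.ncard =
      ∏ j ∈ Finset.Icc 1 n, (Nat.card K ^ j + 1) := by
  rw [← ncard_lagrangiansAbove hB (hB.span_singleton_le_orthogonalBilin (y - x))
      (by rw [finrank_span_singleton (sub_ne_zero.2 hxy.symm)]; omega),
    ← ncard_affineLagrangians_superset x]
  congr 1
  ext A
  exact and_congr_right fun hA ↦ (vadd_span_singleton_sub_subset_iff hA).symm

end Symplectic

-- The third Lagrangian above `H` is `H ⊔ span {a + b}` with `a ∈ L₁ \ H` and `b ∈ L₂ \ H`; its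
-- coset through `a` consists of the halves `a + H` and `b + H` of `L₁` and `L₂`.
lemma exists_affineLagrangian_subset_union_sdiff {V : Type*} [AddCommGroup V]
    [Module (ZMod 2) V] [FiniteDimensional (ZMod 2) V]
    {B : V →ₗ[ZMod 2] V →ₗ[ZMod 2] ZMod 2} (hB : IsSymplectic B)
    {L₁ L₂ H : Submodule (ZMod 2) V} (hL₁ : IsLagrangian B L₁) (hL₂ : IsLagrangian B L₂)
    (hne : L₁ ≠ L₂) (h₁ : H ≤ L₁) (h₂ : H ≤ L₂)
    (hfr : finrank (ZMod 2) V = 2 * (finrank (ZMod 2) H + 1)) :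
    ∃ A ∈ affineLagrangians B, A ⊆ ((L₁ : Set V) ∪ L₂) \ H := by
  obtain ⟨a, ha, ha₂⟩ := SetLike.not_le_iff_exists.1 fun h ↦ hne (hL₁.eq_of_le hL₂ h)
  obtain ⟨b, hb, hb₁⟩ := SetLike.not_le_iff_exists.1 fun h ↦ hne (hL₂.eq_of_le hL₁ h).symm
  have hab : a + b ∉ H := fun h ↦ hb₁ ((L₁.add_mem_iff_right ha).1 (h₁ h))
  have hH : H ≤ H.orthogonalBilin B := h₁.trans (hL₁.le_orthogonalBilin_of_le h₁)
  have hperp : a + b ∈ H.orthogonalBilin B :=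
    add_mem (hL₁.le_orthogonalBilin_of_le h₁ ha) (hL₂.le_orthogonalBilin_of_le h₂ hb)
  have hL₃ : IsLagrangian B (H ⊔ (ZMod 2) ∙ (a + b)) :=
    isLagrangian_of_two_mul_finrank hB (hB.sup_span_singleton_le_orthogonalBilin hH hperp)
      (by rw [Submodule.finrank_sup_span_singleton hab, hfr])
  refine ⟨_, ⟨a, _, hL₃, rfl⟩, ?_⟩
  rintro _ ⟨_, hx, rfl⟩
  obtain ⟨h, hh, c, rfl⟩ := mem_sup_span_singleton_iff.1 hx
  obtain rfl | rfl : c = 0 ∨ c = 1 := (by decide : ∀ c : ZMod 2, c = 0 ∨ c = 1) c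
  · have hmem : a + h ∈ L₁ := L₁.add_mem ha (h₁ hh)
    have hnot : a + h ∉ H := fun hm ↦ ha₂ (h₂ ((H.add_mem_iff_left hh).1 hm))
    simpa using And.intro (Or.inl hmem) hnot
  · have hsum : a + (h + (a + b)) = b + h := by
      rw [← zero_add (b + h), ← ZModModule.add_self a]
      abel
    have hmem : b + h ∈ L₂ := L₂.add_mem hb (h₂ hh)
    have hnot : b + h ∉ H := fun hm ↦ hb₁ (h₁ ((H.add_mem_iff_left hh).1 hm))
    simpa [hsum] using And.intro (Or.inr hmem) hnot

section AffineQuadratic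

section Level

variable {α : Type*} {f : α → ZMod 2}

lemma level_eq_quadric {v : α} (hv : v ∈ quadric f) : {x | f x = f v} = quadric f := by
  rw [show f v = 0 from hv]
  rfl

lemma level_eq_compl_quadric {v : α} (hv : v ∉ quadric f) : {x | f x = f v} = (quadric f)ᶜ := by
  ext x
  change f v ≠ 0 at hv
  change f x = f v ↔ f x ≠ 0
  generalize f x = a at *
  generalize f v = b at *
  revert a b
  decide

end Level

variable {V : Type*} [AddCommGroup V] [Module (ZMod 2) V]
  {B : V →ₗ[ZMod 2] V →ₗ[ZMod 2] ZMod 2}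

/-- `f` is an affine quadratic function with polar form `B`: a quadratic form yielding `B` plus the
constant `f 0`. The affine quadrics are the zero sets of these functions. -/
def IsAffineQuadratic (B : V →ₗ[ZMod 2] V →ₗ[ZMod 2] ZMod 2) (f : V → ZMod 2) : Prop :=
  ∀ x y, f (x + y) = f x + f y + f 0 + B x y

lemma IsAffineQuadric.exists_isAffineQuadratic {D : Set V} (hD : IsAffineQuadric B D) :
    ∃ f, IsAffineQuadratic B f ∧ D = quadric f := by
  obtain ⟨Q, hQ, hD⟩ := hD
  have hQ0 : Q 0 = 0 := by
    have := hQ 0 0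
    rw [add_zero, map_zero] at this
    grind
  rcases hD with rfl | rfl
  · exact ⟨Q, fun x y ↦ by grind [hQ x y], rfl⟩
  · refine ⟨fun x ↦ Q x + 1, fun x y ↦ by grind [hQ x y], Set.ext fun x ↦ ?_⟩
    change Q x ≠ 0 ↔ Q x + 1 = 0
    generalize Q x = a
    revert a
    decide

variable {f : V → ZMod 2} {L : Submodule (ZMod 2) V}

namespace IsAffineQuadratic

/-- The linear part `l ↦ f (v + l) - f v` of the restriction of `f` to the coset `v + L` of an
isotropic subspace `L`. -/
def linearPart (hf : IsAffineQuadratic B f) (hL : L ≤ L.orthogonalBilin B) (v : V) :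
    L →ₗ[ZMod 2] ZMod 2 :=
  (AddMonoidHom.mk' (fun l : L ↦ f (v + l) - f v) fun l l' ↦ by
    have hll' : B l l' = 0 := hL l'.2 l l.2
    have h := hf (v + l) l'
    rw [map_add, LinearMap.add_apply, hll', add_assoc v] at h
    rw [Submodule.coe_add, h]
    grind [hf v l']).toZModLinearMap 2

lemma linearPart_apply (hf : IsAffineQuadratic B f) (hL : L ≤ L.orthogonalBilin B) (v : V)
    (l : L) : hf.linearPart hL v l = f (v + l) - f v := rfl

lemma linearPart_eq_add (hf : IsAffineQuadratic B f) (hL : L ≤ L.orthogonalBilin B) (x v : V)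
    (l : L) : hf.linearPart hL x l = hf.linearPart hL v l + B (x - v) l := by
  rw [linearPart_apply, linearPart_apply, map_sub, LinearMap.sub_apply]
  grind [hf x l, hf v l]

lemma exists_hyperplane [Finite V] (hf : IsAffineQuadratic B f) (hL : L ≤ L.orthogonalBilin B)
    {v w : V} (hw : w ∈ v +ᵥ (L : Set V)) (hne : f w ≠ f v) :
    ∃ H ≤ L, finrank (ZMod 2) H + 1 = finrank (ZMod 2) L ∧
      v +ᵥ (H : Set V) = (v +ᵥ (L : Set V)) ∩ {x | f x = f v} := by
  obtain ⟨l, hl, rfl⟩ := hw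
  have hne0 : hf.linearPart hL v ≠ 0 := fun h ↦
    hne (sub_eq_zero.1 (LinearMap.congr_fun h ⟨l, hl⟩))
  refine ⟨(LinearMap.ker (hf.linearPart hL v)).map L.subtype, Submodule.map_subtype_le _ _, ?_, ?_⟩
  · rw [Submodule.finrank_map_subtype_eq, Module.Dual.finrank_ker_add_one_of_ne_zero hne0]
  · ext x
    constructor
    · rintro ⟨_, ⟨m, hm, rfl⟩, rfl⟩
      exact ⟨⟨m, m.2, rfl⟩, sub_eq_zero.1 hm⟩
    · rintro ⟨⟨m, hm, rfl⟩, hfm⟩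
      exact ⟨m, ⟨⟨m, hm⟩, sub_eq_zero.2 hfm, rfl⟩, rfl⟩

-- If `f` is `1` on `v + L` and `0` on `x + L`, both linear parts vanish, so `x - v` is orthogonal
-- to `L` and the two cosets coincide.
lemma not_vadd_subset_quadric (hf : IsAffineQuadratic B f) (hB : IsSymplectic B)
    (hL : IsLagrangian B L) {v : V} (hv : Disjoint (v +ᵥ (L : Set V)) (quadric f)) (x : V) :
    ¬x +ᵥ (L : Set V) ⊆ quadric f := by
  intro hx
  have hself (y : V) : y ∈ y +ᵥ (L : Set V) := ⟨0, L.zero_mem, add_zero y⟩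
  have hadd (y : V) (l : L) : y + l ∈ y +ᵥ (L : Set V) := ⟨l, l.2, rfl⟩
  have hLL := (isLagrangian_iff.1 hL).le
  have hlinx (l : L) : hf.linearPart hLL x l = 0 :=
    sub_eq_zero.2 ((hx (hadd x l)).trans (hx (hself x)).symm)
  have hlinv (l : L) : hf.linearPart hLL v l = 0 := by
    refine sub_eq_zero.2 (?_ : v + l ∈ {y | f y = f v})
    rw [level_eq_compl_quadric (hv.notMem_of_mem_left (hself v))]
    exact hv.notMem_of_mem_left (hadd v l)
  have hxv : x - v ∈ L := hL.mem_iff.2 fun l hl ↦ hB.isAlt.isRefl _ _ <| by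
    simpa [hlinx, hlinv] using (hf.linearPart_eq_add hLL x v ⟨l, hl⟩).symm
  rw [vadd_submodule_eq_iff.2 hxv] at hx
  exact hv.notMem_of_mem_left (hself v) (hx (hself v))

end IsAffineQuadratic

section Split

variable [Finite V] {n : ℕ} {A : Set V}

lemma IsAffineQuadratic.exists_isotropic_vadd_eq_inter_level (hf : IsAffineQuadratic B f)
    (hB : IsSymplectic B) (hfr : finrank (ZMod 2) V = 2 * (n + 1))
    (hA : A ∈ affineLagrangians B) {v w : V} (hv : v ∈ A) (hw : w ∈ A) (hne : f w ≠ f v) :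
    ∃ H : Submodule (ZMod 2) V, H ≤ H.orthogonalBilin B ∧ finrank (ZMod 2) H = n ∧
      v +ᵥ (H : Set V) = A ∩ {x | f x = f v} := by
  obtain ⟨L, hL, rfl⟩ := exists_eq_vadd_of_mem_affineLagrangians hA hv
  obtain ⟨H, hHL, hH, hlevel⟩ := hf.exists_hyperplane (isLagrangian_iff.1 hL).le hw hne
  have := hL.two_mul_finrank hB
  exact ⟨H, hHL.trans (hL.le_orthogonalBilin_of_le hHL), by omega, hlevel⟩

lemma IsAffineQuadratic.ncard_inter_level (hf : IsAffineQuadratic B f)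
    (hB : IsSymplectic B) (hfr : finrank (ZMod 2) V = 2 * (n + 1))
    (hA : A ∈ affineLagrangians B) {v w : V} (hv : v ∈ A) (hw : w ∈ A) (hne : f w ≠ f v) :
    (A ∩ {x | f x = f v}).ncard = 2 ^ n := by
  obtain ⟨H, -, hH, hlevel⟩ := hf.exists_isotropic_vadd_eq_inter_level hB hfr hA hv hw hne
  rw [← hlevel, ncard_vadd_submodule, hH, Nat.card_zmod]

lemma IsAffineQuadratic.ncard_inter_quadric (hf : IsAffineQuadratic B f)
    (hB : IsSymplectic B) (hfr : finrank (ZMod 2) V = 2 * (n + 1))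
    (hA : A ∈ affineLagrangians B) (h₀ : (A ∩ quadric f).Nonempty) (h₁ : ¬A ⊆ quadric f) :
    (A ∩ (quadric f)ᶜ).ncard = 2 ^ n ∧ (A ∩ quadric f).ncard = 2 ^ n := by
  obtain ⟨v, hv, hv₀⟩ := h₀
  obtain ⟨w, hw, hw₁⟩ := Set.not_subset.1 h₁
  have hne : f w ≠ f v := fun h ↦ hw₁ (h.trans hv₀)
  rw [← level_eq_compl_quadric hw₁, ← level_eq_quadric hv₀]
  exact ⟨hf.ncard_inter_level hB hfr hA hw hv hne.symm, hf.ncard_inter_level hB hfr hA hv hw hne⟩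

lemma IsAffineQuadratic.inter_quadric_nonempty (hf : IsAffineQuadratic B f)
    (hB : IsSymplectic B) (hfr : finrank (ZMod 2) V = 2 * (n + 1))
    (hlt : (quadric f)ᶜ.ncard < (quadric f).ncard) (hA : A ∈ affineLagrangians B) :
    (A ∩ quadric f).Nonempty := by
  obtain ⟨v, L, hL, rfl⟩ := hA
  refine Set.not_disjoint_iff_nonempty_inter.1 fun hv ↦ ?_
  refine hlt.not_ge (ncard_le_ncard_of_forall_fiber L.mkQ fun x ↦ ?_)
  rw [mkQ_preimage_singleton]
  have hx := hf.not_vadd_subset_quadric hB hL hv x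
  rcases ((x +ᵥ (L : Set V)) ∩ quadric f).eq_empty_or_nonempty with h | h
  · simp [h]
  · have hhalf := hf.ncard_inter_quadric hB hfr ⟨x, L, hL, rfl⟩ h hx
    exact (hhalf.2.trans hhalf.1.symm).le

lemma IsAffineQuadratic.eq_of_inter_quadric_eq (hf : IsAffineQuadratic B f)
    (hB : IsSymplectic B) (hfr : finrank (ZMod 2) V = 2 * (n + 1))
    (hlt : (quadric f)ᶜ.ncard < (quadric f).ncard) {A₁ A₂ : Set V}
    (hA₁ : A₁ ∈ affineLagrangians B) (hA₂ : A₂ ∈ affineLagrangians B)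
    (hout : ¬A₁ ⊆ quadric f) (h : A₁ ∩ quadric f = A₂ ∩ quadric f) : A₁ = A₂ := by
  obtain ⟨v, hv₁, hv₀⟩ := hf.inter_quadric_nonempty hB hfr hlt hA₁
  obtain ⟨w, hw, hw₁⟩ := Set.not_subset.1 hout
  obtain ⟨H, -, hH, htrace⟩ := hf.exists_isotropic_vadd_eq_inter_level hB hfr hA₁ hv₁ hw
    fun hwv ↦ hw₁ (hwv.trans hv₀)
  rw [level_eq_quadric hv₀] at htrace
  have hv₂ : v ∈ A₂ := (h.le ⟨hv₁, hv₀⟩).1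
  obtain ⟨L₁, hL₁, rfl⟩ := exists_eq_vadd_of_mem_affineLagrangians hA₁ hv₁
  obtain ⟨L₂, hL₂, rfl⟩ := exists_eq_vadd_of_mem_affineLagrangians hA₂ hv₂
  have hHL₁ : H ≤ L₁ :=
    Set.vadd_set_subset_vadd_set_iff.1 (htrace.le.trans Set.inter_subset_left)
  have hHL₂ : H ≤ L₂ :=
    Set.vadd_set_subset_vadd_set_iff.1 ((htrace.trans h).le.trans Set.inter_subset_left)
  by_contra hne
  obtain ⟨A, hA, hsub⟩ := exists_affineLagrangian_subset_union_sdiff hB hL₁ hL₂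
    (fun hL ↦ hne (hL ▸ rfl)) hHL₁ hHL₂ (hH ▸ hfr)
  obtain ⟨_, ⟨l, hl, rfl⟩, hl₀⟩ :=
    hf.inter_quadric_nonempty hB hfr hlt (vadd_mem_affineLagrangians hA v)
  have hl' : v +ᵥ l ∈ v +ᵥ (H : Set V) := by
    rw [htrace]
    rcases (hsub hl).1 with hl₁ | hl₂
    · exact ⟨⟨l, hl₁, rfl⟩, hl₀⟩
    · exact h.ge ⟨⟨l, hl₂, rfl⟩, hl₀⟩
  exact (hsub hl).2 (Set.vadd_mem_vadd_set_iff.1 hl')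

lemma IsAffineQuadratic.ncard_affineLagrangians_inter_compl_quadric_eq
    (hf : IsAffineQuadratic B f) (hB : IsSymplectic B) (hfr : finrank (ZMod 2) V = 2 * (n + 1))
    (hlt : (quadric f)ᶜ.ncard < (quadric f).ncard) (hA : A ∈ affineLagrangians B)
    (hout : ¬A ⊆ quadric f) :
    {A' ∈ affineLagrangians B |
      ¬A' ⊆ quadric f ∧ A' ∩ (quadric f)ᶜ = A ∩ (quadric f)ᶜ}.ncard = 3 := by
  have hhalf (A' : Set V) (hA' : A' ∈ affineLagrangians B) (hout' : ¬A' ⊆ quadric f) :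
      (A' ∩ (quadric f)ᶜ).ncard = 2 ^ n :=
    (hf.ncard_inter_quadric hB hfr hA' (hf.inter_quadric_nonempty hB hfr hlt hA') hout').1
  obtain ⟨w, hw, hw₀⟩ := hf.inter_quadric_nonempty hB hfr hlt hA
  obtain ⟨v, hv, hv₁⟩ := Set.not_subset.1 hout
  obtain ⟨H, hHH, hH, htrace⟩ := hf.exists_isotropic_vadd_eq_inter_level hB hfr hA hv hw
    fun hwv ↦ hv₁ (hwv.symm.trans hw₀)
  rw [level_eq_compl_quadric hv₁] at htrace
  calc
    _ = {A' ∈ affineLagrangians B | v +ᵥ (H : Set V) ⊆ A'}.ncard := by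
      rw [htrace]
      congr 1
      ext A'
      refine and_congr_right fun hA' ↦ ⟨fun h ↦ h.2 ▸ Set.inter_subset_left, fun h ↦ ?_⟩
      have hout' : ¬A' ⊆ quadric f := fun hsub ↦ hv₁ (hsub (h ⟨hv, hv₁⟩))
      refine ⟨hout', (Set.eq_of_subset_of_ncard_le (Set.subset_inter h Set.inter_subset_right)
        ?_).symm⟩
      rw [hhalf A hA hout, hhalf A' hA' hout']
    _ = ∏ j ∈ Finset.Icc 1 1, (Nat.card (ZMod 2) ^ j + 1) := by
      rw [ncard_affineLagrangians_superset, ncard_lagrangiansAbove hB hHH (hH ▸ hfr)]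
    _ = 3 := by simp

lemma IsAffineQuadratic.ncard_traces_mem_mem_mul_three (hf : IsAffineQuadratic B f)
    (hB : IsSymplectic B) (hfr : finrank (ZMod 2) V = 2 * (n + 1))
    (hlt : (quadric f)ᶜ.ncard < (quadric f).ncard) {x y : V} (hx : x ∉ quadric f)
    (hy : y ∉ quadric f) (hxy : x ≠ y) :
    {C : Set V | (∃ A ∈ affineLagrangians B, ¬A ⊆ quadric f ∧ C = A ∩ (quadric f)ᶜ) ∧
      x ∈ C ∧ y ∈ C}.ncard * 3 = ∏ j ∈ Finset.Icc 1 n, (2 ^ j + 1) := by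
  have himage : {C : Set V | (∃ A ∈ affineLagrangians B, ¬A ⊆ quadric f ∧
      C = A ∩ (quadric f)ᶜ) ∧ x ∈ C ∧ y ∈ C} =
      (· ∩ (quadric f)ᶜ) '' {A ∈ affineLagrangians B | x ∈ A ∧ y ∈ A} := by
    ext C
    constructor
    · rintro ⟨⟨A, hA, -, rfl⟩, hxA, hyA⟩
      exact ⟨A, ⟨hA, hxA.1, hyA.1⟩, rfl⟩
    · rintro ⟨A, ⟨hA, hxA, hyA⟩, rfl⟩
      exact ⟨⟨A, hA, fun h ↦ hx (h hxA), rfl⟩, ⟨hxA, hx⟩, hyA, hy⟩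
  rw [himage, ← ncard_eq_ncard_image_mul (Set.toFinite _),
    ncard_affineLagrangians_mem_mem hB hfr hxy, Nat.card_zmod]
  rintro A ⟨hA, hxA, hyA⟩
  rw [← hf.ncard_affineLagrangians_inter_compl_quadric_eq hB hfr hlt hA fun h ↦ hx (h hxA)]
  congr 1
  ext A'
  constructor
  · rintro ⟨⟨hA', hxA', -⟩, htrace⟩
    exact ⟨hA', fun h ↦ hx (h hxA'), htrace⟩
  · rintro ⟨hA', -, htrace⟩
    exact ⟨⟨hA', (htrace.ge ⟨hxA, hx⟩).1, (htrace.ge ⟨hyA, hy⟩).1⟩, htrace⟩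

end Split

lemma ncard_compl_lt_ncard_of_ncard_eq {D : Set V} {n : ℕ} (hfr : finrank (ZMod 2) V = 2 * (n + 1))
    (hD : D.ncard = 2 ^ n * (2 ^ (n + 1) + 1)) : Dᶜ.ncard < D.ncard := by
  have : Module.Finite (ZMod 2) V := Module.finite_of_finrank_pos (by omega)
  have : Finite V := Module.finite_of_finite (ZMod 2)
  have hcompl := D.ncard_add_ncard_compl
  rw [Module.natCard_eq_pow_finrank (K := ZMod 2), hfr, Nat.card_zmod, hD] at hcompl
  have hpow : 2 ^ (2 * (n + 1)) + 2 * 2 ^ n = 2 * (2 ^ n * (2 ^ (n + 1) + 1)) := by ring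
  have hpos : 0 < 2 ^ n := by positivity
  omega

end AffineQuadratic
end

/-- For an affine quadric `D` of size `2^{J−1}(2^J+1)`, every
affine Lagrangian subspace not contained in `D` is split in half by `D`;
intersection with `D` is injective on such subspaces while intersection with
`V∖D` is exactly three-to-one; and the resulting distinct traces on `V∖D` form
a BIBD with parameters `(2^{J−1}(2^J−1), 2^{J−1}, ∏_{j=2}^{J−1}(2^j+1))`. -/
theorem affine_lagrangians_outside_affine_quadric
    {J : ℕ} (hJ : 2 ≤ J)
    {V : Type*} [AddCommGroup V] [Module (ZMod 2) V] [Fintype V] [DecidableEq V]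
    (hdim : Module.finrank (ZMod 2) V = 2 * J)
    (B : V →ₗ[ZMod 2] V →ₗ[ZMod 2] ZMod 2) (hB : IsSymplectic B)
    (D : Set V) (hD : IsAffineQuadric B D)
    (hDcard : D.ncard = 2 ^ (J - 1) * (2 ^ J + 1)) :
    (∀ A ∈ affineLagrangians B, ¬A ⊆ D →
      (A ∩ Dᶜ).ncard = 2 ^ (J - 1) ∧ (A ∩ D).ncard = 2 ^ (J - 1)) ∧
    (∀ A₁ ∈ affineLagrangians B, ∀ A₂ ∈ affineLagrangians B,
      ¬A₁ ⊆ D → ¬A₂ ⊆ D → A₁ ∩ D = A₂ ∩ D → A₁ = A₂) ∧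
    (∀ A ∈ affineLagrangians B, ¬A ⊆ D →
      {A' ∈ affineLagrangians B | ¬A' ⊆ D ∧ A' ∩ Dᶜ = A ∩ Dᶜ}.ncard = 3) ∧
    (∀ x ∈ Dᶜ, ∀ y ∈ Dᶜ, x ≠ y →
      {C : Set V | (∃ A ∈ affineLagrangians B, ¬A ⊆ D ∧ C = A ∩ Dᶜ) ∧
        x ∈ C ∧ y ∈ C}.ncard = ∏ j ∈ Finset.Icc 2 (J - 1), (2 ^ j + 1)) := by
  obtain ⟨n, rfl⟩ : ∃ n, J = n + 1 := ⟨J - 1, by omega⟩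
  simp only [Nat.add_sub_cancel] at hDcard ⊢
  obtain ⟨f, hf, rfl⟩ := hD.exists_isAffineQuadratic
  have hlt := ncard_compl_lt_ncard_of_ncard_eq hdim hDcard
  refine ⟨fun A hA hout ↦ ?_, fun A₁ hA₁ A₂ hA₂ hout _ h ↦ ?_, fun A hA hout ↦ ?_,
    fun x hx y hy hxy ↦ ?_⟩
  · exact hf.ncard_inter_quadric hB hdim hA (hf.inter_quadric_nonempty hB hdim hlt hA) hout
  · exact hf.eq_of_inter_quadric_eq hB hdim hlt hA₁ hA₂ hout h
  · exact hf.ncard_affineLagrangians_inter_compl_quadric_eq hB hdim hlt hA hout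
  · have h := hf.ncard_traces_mem_mem_mul_three hB hdim hlt hx hy hxy
    rw [← Finset.mul_prod_Ioc_eq_prod_Icc (by omega : 1 ≤ n), ← Finset.Icc_add_one_left_eq_Ioc,
      mul_comm] at h
    exact Nat.eq_of_mul_eq_mul_left three_pos h
end
end
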